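/- For every index s ∈ {1, …, d}, the sum over all phases t = 1, …, d of the weights of the items (t, 1) on dimension σ(s) equals 1 − δ, i.e., ∑_{t=1}^{d} w_{t,1}(σ(s)) = 1 − δ ≤ 1. In particular, the d items (1,1), (2,1), …, (d,1) can all be accepted simultaneously without violating any of the d knapsack capacity constraints, so the offline optimum of the hard instance has value at least d. -/

import Mathlib

open scoped BigOperators

/-- The weight of item `(t, j)` (1-based phase `t`, 1-based index `j`) on dimension
`i : Fin d` of the hard instance, where `δ = 2^{-2d}` and `σ` is a permutation of the
`d` dimensions. Writing `s ∈ {1, …, d}` for the 1-based position with `σ(s) = i`: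
the weight is `0` if `s ≤ t − 1`, is `1 − (2^t − 1)·δ` if `s = t + j − 1`, and is
`2^t·δ` otherwise. -/
noncomputable def whard (d : ℕ) (σ : Equiv.Perm (Fin d)) (t j : ℕ) (i : Fin d) : ℝ :=
  let s : ℕ := ((σ.symm i : Fin d) : ℕ) + 1
  let δ : ℝ := (1 / 2) ^ (2 * d)
  if s ≤ t - 1 then 0
  else if s = t + j - 1 then 1 - ((2 : ℝ) ^ t - 1) * δ
  else (2 : ℝ) ^ t * δ

/-- Partial sums of the weights of the items `(t, 1)` on the dimension with 1-based
position `S`. -/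
lemma partial_sum_aux (δ : ℝ) (S : ℕ) (hS : 1 ≤ S) (n : ℕ) :
    (∑ t ∈ Finset.Icc 1 n, (if S ≤ t - 1 then (0 : ℝ)
      else if S = t + 1 - 1 then 1 - ((2 : ℝ) ^ t - 1) * δ else (2 : ℝ) ^ t * δ)) =
    if n < S then ((2 : ℝ) ^ (n + 1) - 2) * δ else 1 - δ := by
  induction n with
  | zero => simp [show 0 < S by omega]
  | succ k ih =>
    rw [Finset.sum_Icc_succ_top (by omega), ih]
    rcases lt_trichotomy S (k + 1) with h | h | h
    · rw [if_neg (by omega), if_pos (by omega), if_neg (by omega)]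
      ring
    · rw [if_pos (by omega), if_neg (by omega), if_pos (by omega), if_neg (by omega)]
      ring
    · rw [if_pos (by omega), if_neg (by omega), if_neg (by omega), if_pos (by omega)]
      ring

/-- On every dimension `σ(s)`, the items `(t, 1)` for `t = 1, …, d` have total weight
exactly `1 − δ ≤ 1`; hence they can all be accepted simultaneously and the offline
optimum of the hard instance is at least `d`. Here `s : Fin d` represents the 1-based
index `(s : ℕ) + 1 ∈ {1, …, d}`. -/
theorem statement10 (d : ℕ) (hd : 1 ≤ d) (σ : Equiv.Perm (Fin d)) (s : Fin d) :
    (∑ t ∈ Finset.Icc 1 d, whard d σ t 1 (σ s)) = 1 - (1 / 2 : ℝ) ^ (2 * d) ∧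
    (1 - (1 / 2 : ℝ) ^ (2 * d)) ≤ 1 := by
  refine ⟨?_, ?_⟩
  · simp only [whard, Equiv.symm_apply_apply]
    rw [partial_sum_aux _ _ (by omega), if_neg (by omega)]
  · have : (0 : ℝ) ≤ (1 / 2 : ℝ) ^ (2 * d) := by positivity
    linarith
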